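/- arXiv:2308.01714 — 2 statements merged into one kernel-verified Lean document; each statement's English description precedes it below -/
import Mathlib

section
/- Let d ≥ 2, let |ψ⟩, |φ⟩ be unit vectors in ℂ^d, and let U be Haar-distributed on U(d). Then for every t ∈ [0,1], the probability that |⟨φ, Uψ⟩|² ≤ t equals 1 − (1−t)^{d−1}; equivalently, the fidelity |⟨φ, Uψ⟩|² has probability density f ↦ (d−1)(1−f)^{d−2} on [0,1]. -/
open MeasureTheory Matrix Finset
open scoped ComplexConjugate

noncomputable section

/-- Borel measurable structure on the unitary group `U(d)`. -/
instance (n : Type*) [Fintype n] [DecidableEq n] :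
    MeasurableSpace (Matrix.unitaryGroup n ℂ) := borel _

instance (n : Type*) [Fintype n] [DecidableEq n] :
    BorelSpace (Matrix.unitaryGroup n ℂ) := ⟨rfl⟩

/-- The standard Hermitian inner product on `ℂ^d`, identified with `Fin d → ℂ`. -/
def vecInner {d : ℕ} (x y : Fin d → ℂ) : ℂ := ∑ i : Fin d, conj (x i) * y i

/-!
By left invariance and homogeneity, the probability that `|⟨x, Uψ⟩|² > t‖x‖²` is the same for every
`x ≠ 0`. Averaging it over a Gaussian vector `x`, whose law is unitarily invariant, and exchanging
the integrals removes `U`: the tail of the fidelity is the probability that `|⟨x, ψ⟩|² > t‖x‖²`.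
Write `x = w ψ + y` with `y ⊥ ψ` and `s = t / (1 - t)`, so that the event becomes `|w|² > s‖y‖²`.
As `w` is a complex Gaussian independent of `y`, `|w|²` has tail `e^(-a)`, so the probability is
`𝔼 e^(-s‖y‖²) = (1 + s)^(-(d - 1)) = (1 - t)^(d - 1)`.
-/

open Module Real

lemma measurePreserving_withDensity_comp {α β : Type*} [MeasurableSpace α] [MeasurableSpace β]
    {μ : Measure α} {ν : Measure β} {f : α → β} (hf : MeasurePreserving f μ ν)
    {g : β → ENNReal} (hg : Measurable g) :
    MeasurePreserving f (μ.withDensity (g ∘ f)) (ν.withDensity g) := by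
  refine ⟨hf.measurable, Measure.ext fun s hs ↦ ?_⟩
  rw [Measure.map_apply hf.measurable hs, withDensity_apply _ (hf.measurable hs),
    withDensity_apply _ hs, ← hf.setLIntegral_comp_preimage hs hg]
  rfl

lemma integral_Ioi_mul_exp_neg_sq (a : ℝ) :
    ∫ r in Set.Ioi a, r * exp (-r ^ 2) = exp (-a ^ 2) / 2 := by
  have hderiv (r : ℝ) : HasDerivAt (fun r ↦ -exp (-r ^ 2) / 2) (r * exp (-r ^ 2)) r := by
    convert! ((hasDerivAt_pow 2 r).fun_neg.exp.fun_neg.div_const 2) using 1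
    push_cast
    ring
  have hintegrable : IntegrableOn (fun r : ℝ ↦ r * exp (-r ^ 2)) (Set.Ioi a) := by
    simpa using (integrable_mul_exp_neg_mul_sq one_pos).integrableOn
  have hlim : Filter.Tendsto (fun r : ℝ ↦ -exp (-r ^ 2) / 2) Filter.atTop (nhds 0) := by
    simpa using ((tendsto_exp_neg_atTop_nhds_zero.comp
      (Filter.tendsto_pow_atTop two_ne_zero)).neg.div_const 2)
  rw [integral_Ioi_of_hasDerivAt_of_tendsto' (fun r _ ↦ hderiv r) hintegrable hlim]
  ring

lemma ext_of_Iic_of_ae_mem_Icc {α : Type*} [TopologicalSpace α] [SecondCountableTopology α]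
    [LinearOrder α] [OrderTopology α] [MeasurableSpace α] [BorelSpace α]
    {μ ν : Measure α} [IsFiniteMeasure μ] {a b : α} (hab : a ≤ b)
    (hμ : ∀ᵐ x ∂μ, x ∈ Set.Icc a b) (hν : ∀ᵐ x ∂ν, x ∈ Set.Icc a b)
    (h : ∀ t ∈ Set.Icc a b, μ (Set.Iic t) = ν (Set.Iic t)) : μ = ν := by
  refine Measure.ext_of_Iic μ ν fun t ↦ ?_
  rcases lt_or_ge t a with hta | hat
  · have hnull {κ : Measure α} (hκ : ∀ᵐ x ∂κ, x ∈ Set.Icc a b) : κ (Set.Iic t) = 0 :=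
      measure_eq_zero_iff_ae_notMem.2 <| hκ.mono fun x hx hxt ↦ (hxt.trans_lt hta).not_ge hx.1
    rw [hnull hμ, hnull hν]
  · have hmin {κ : Measure α} (hκ : ∀ᵐ x ∂κ, x ∈ Set.Icc a b) :
        κ (Set.Iic t) = κ (Set.Iic (min t b)) :=
      measure_congr <| hκ.mono fun x hx ↦ propext (by simp [hx.2] : x ≤ t ↔ x ≤ min t b)
    rw [hmin hμ, hmin hν, h _ ⟨le_min hat hab, min_le_right _ _⟩]

lemma integral_zero_mul_one_sub_pow (n : ℕ) (t : ℝ) :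
    ∫ x in 0..t, (n + 1) * (1 - x) ^ n = 1 - (1 - t) ^ (n + 1) := by
  rw [intervalIntegral.integral_eq_sub_of_hasDerivAt (f := fun x ↦ -(1 - x) ^ (n + 1))]
  · simp only [sub_zero, one_pow]
    ring
  · intro x _
    simpa using! (((hasDerivAt_id x).const_sub 1).pow (n + 1)).neg
  · exact Continuous.intervalIntegrable (by fun_prop) _ _

lemma withDensity_ofReal_ite_mem_Icc {α : Type*} [TopologicalSpace α] [LinearOrder α]
    [OrderClosedTopology α] [MeasurableSpace α] [OpensMeasurableSpace α]
    (μ : Measure α) (f : α → ℝ) (a b : α) :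
    (μ.withDensity fun x ↦ ENNReal.ofReal (if a ≤ x ∧ x ≤ b then f x else 0)) =
      (μ.restrict (Set.Icc a b)).withDensity fun x ↦ ENNReal.ofReal (f x) := by
  rw [← withDensity_indicator measurableSet_Icc]
  congr 1 with x
  simp only [Set.indicator_apply, Set.mem_Icc, apply_ite ENNReal.ofReal, ENNReal.ofReal_zero]

lemma restrict_Icc_withDensity_mul_one_sub_pow_Iic (n : ℕ) {t : ℝ} (ht : t ∈ Set.Icc (0 : ℝ) 1) :
    ((volume.restrict (Set.Icc 0 1)).withDensity fun x : ℝ ↦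
        ENNReal.ofReal ((n + 1) * (1 - x) ^ n)) (Set.Iic t) =
      ENNReal.ofReal (1 - (1 - t) ^ (n + 1)) := by
  have hIcc : Set.Iic t ∩ Set.Icc 0 1 = Set.Icc 0 t := by
    ext x
    simp only [Set.mem_inter_iff, Set.mem_Iic, Set.mem_Icc]
    exact ⟨fun h ↦ ⟨h.2.1, h.1⟩, fun h ↦ ⟨h.2, h.1, h.2.trans ht.2⟩⟩
  have hnonneg : ∀ᵐ x : ℝ ∂volume.restrict (Set.Icc 0 t), 0 ≤ (n + 1) * (1 - x) ^ n :=
    (ae_restrict_mem measurableSet_Icc).mono fun x hx ↦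
      mul_nonneg n.cast_add_one_pos.le (pow_nonneg (sub_nonneg.2 (hx.2.trans ht.2)) n)
  rw [withDensity_apply _ measurableSet_Iic, Measure.restrict_restrict measurableSet_Iic, hIcc,
    ← ofReal_integral_eq_lintegral_ofReal (Continuous.integrableOn_Icc (by fun_prop)) hnonneg,
    integral_Icc_eq_integral_Ioc, ← intervalIntegral.integral_of_le ht.1,
    integral_zero_mul_one_sub_pow]

lemma exists_linearIsometryEquiv_apply_eq {𝕜 E : Type*} [RCLike 𝕜] [NormedAddCommGroup E]
    [InnerProductSpace 𝕜 E] [FiniteDimensional 𝕜 E] {x y : E} (hx : ‖x‖ = 1) (hy : ‖y‖ = 1) :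
    ∃ f : E ≃ₗᵢ[𝕜] E, f x = y := by
  let L : (𝕜 ∙ x) →ₗᵢ[𝕜] E := (LinearIsometry.toSpanSingleton 𝕜 E hy).comp
    (LinearIsometryEquiv.toSpanUnitSingleton x hx).symm.toLinearIsometry
  refine ⟨L.extend.toLinearIsometryEquiv rfl, ?_⟩
  have hxL : (LinearIsometryEquiv.toSpanUnitSingleton (𝕜 := 𝕜) x hx).symm
      ⟨x, Submodule.mem_span_singleton_self x⟩ = 1 := by
    rw [LinearIsometryEquiv.symm_apply_eq]
    simp
  simpa [L, hxL] using L.extend_apply ⟨x, Submodule.mem_span_singleton_self x⟩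

section GaussianWeight

variable {V : Type*} [NormedAddCommGroup V] [InnerProductSpace ℝ V] [FiniteDimensional ℝ V]
  [MeasurableSpace V] [BorelSpace V]

lemma integrable_exp_neg_mul_norm_sq {b : ℝ} (hb : 0 < b) :
    Integrable fun v : V ↦ exp (-b * ‖v‖ ^ 2) :=
  .of_integral_ne_zero <| by
    rw [GaussianFourier.integral_rexp_neg_mul_sq_norm hb]
    positivity

lemma lintegral_exp_neg_mul_norm_sq {b : ℝ} (hb : 0 < b) :
    ∫⁻ v : V, ENNReal.ofReal (exp (-b * ‖v‖ ^ 2)) =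
      ENNReal.ofReal ((π / b) ^ (finrank ℝ V / 2 : ℝ)) := by
  rw [← GaussianFourier.integral_rexp_neg_mul_sq_norm hb, ofReal_integral_eq_lintegral_ofReal
    (integrable_exp_neg_mul_norm_sq hb) (.of_forall fun v ↦ (exp_pos _).le)]

variable (V) in
/-- The unnormalized isotropic Gaussian measure on a real inner product space, with density
`exp (-‖v‖²)`: rotation invariant, and a product measure along orthogonal decompositions. The
missing normalization `π ^ (-dim V / 2)` cancels in every use. -/
def gaussianWeight : Measure V :=
  volume.withDensity fun v ↦ ENNReal.ofReal (exp (-‖v‖ ^ 2))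

lemma lintegral_gaussianWeight {f : V → ENNReal} (hf : Measurable f) :
    ∫⁻ v, f v ∂gaussianWeight V = ∫⁻ v, ENNReal.ofReal (exp (-‖v‖ ^ 2)) * f v := by
  rw [gaussianWeight, lintegral_withDensity_eq_lintegral_mul _ (by fun_prop) hf]
  rfl

lemma gaussianWeight_univ :
    gaussianWeight V Set.univ = ENNReal.ofReal (π ^ (finrank ℝ V / 2 : ℝ)) := by
  simpa [gaussianWeight] using lintegral_exp_neg_mul_norm_sq (V := V) one_pos

instance : IsFiniteMeasure (gaussianWeight V) :=
  ⟨by simp [gaussianWeight_univ]⟩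

lemma gaussianWeight_singleton [Nontrivial V] (v : V) : gaussianWeight V {v} = 0 :=
  withDensity_absolutelyContinuous _ _ (measure_singleton v)

lemma measurePreserving_gaussianWeight {W : Type*} [NormedAddCommGroup W] [InnerProductSpace ℝ W]
    [FiniteDimensional ℝ W] [MeasurableSpace W] [BorelSpace W] (f : V ≃ₗᵢ[ℝ] W) :
    MeasurePreserving f (gaussianWeight V) (gaussianWeight W) := by
  have := measurePreserving_withDensity_comp f.measurePreserving
    (g := fun v ↦ ENNReal.ofReal (exp (-‖v‖ ^ 2))) (by fun_prop)
  simpa [Function.comp_def] using! this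

lemma measurePreserving_orthogonalProjections_gaussianWeight (K : Submodule ℝ V) :
    MeasurePreserving (fun v ↦ (K.orthogonalProjectionOnto v, Kᗮ.orthogonalProjectionOnto v))
      (gaussianWeight V) ((gaussianWeight K).prod (gaussianWeight Kᗮ)) := by
  have hvol : MeasurePreserving
      (fun v ↦ (K.orthogonalProjectionOnto v, Kᗮ.orthogonalProjectionOnto v)) := by
    simpa [Function.comp_def] using! (WithLp.volume_preserving_ofLp K Kᗮ).comp
      K.orthogonalDecomposition.measurePreserving
  have hdens (v : V) : ENNReal.ofReal (exp (-‖v‖ ^ 2)) =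
      ENNReal.ofReal (exp (-‖K.orthogonalProjectionOnto v‖ ^ 2)) *
        ENNReal.ofReal (exp (-‖Kᗮ.orthogonalProjectionOnto v‖ ^ 2)) := by
    rw [Submodule.norm_sq_eq_add_norm_sq_projection v K, neg_add, exp_add,
      ENNReal.ofReal_mul (exp_nonneg _)]
  unfold gaussianWeight
  rw [prod_withDensity (by fun_prop) (by fun_prop), ← Measure.volume_eq_prod]
  simp_rw [hdens]
  exact measurePreserving_withDensity_comp hvol (g := fun p : K × Kᗮ ↦
    ENNReal.ofReal (exp (-‖p.1‖ ^ 2)) * ENNReal.ofReal (exp (-‖p.2‖ ^ 2))) (by fun_prop)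

lemma gaussianWeight_lt_norm_sq (hV : finrank ℝ V = 2) {a : ℝ} (ha : 0 ≤ a) :
    gaussianWeight V {v | a < ‖v‖ ^ 2} = ENNReal.ofReal (π * exp (-a)) := by
  have : Nontrivial V := nontrivial_of_finrank_pos (R := ℝ) (by omega)
  have hball : volume.real (Metric.ball (0 : V) 1) = π := by
    simp [Measure.real, InnerProductSpace.volume_ball_of_dim_even (k := 1) hV, pi_nonneg]
  have hS : MeasurableSet {v : V | a < ‖v‖ ^ 2} := measurableSet_lt (by fun_prop) (by fun_prop)
  have hintegrable : Integrable fun v : V ↦ exp (-‖v‖ ^ 2) := by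
    simpa using integrable_exp_neg_mul_norm_sq (V := V) one_pos
  have hradial : Set.Ioi (√a) = Set.Ioi 0 ∩ {r : ℝ | a < r ^ 2} := by
    ext r
    constructor
    · intro hr
      have h0 : 0 < r := (sqrt_nonneg a).trans_lt hr
      exact ⟨h0, (sqrt_lt' h0).1 hr⟩
    · exact fun hr ↦ (sqrt_lt' hr.1).2 hr.2
  rw [gaussianWeight, withDensity_apply _ hS, ← ofReal_integral_eq_lintegral_ofReal
    hintegrable.integrableOn (.of_forall fun v ↦ (exp_pos _).le), ← integral_indicator hS]
  congr 1
  calc ∫ v : V, {v : V | a < ‖v‖ ^ 2}.indicator (fun v ↦ exp (-‖v‖ ^ 2)) v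
      = 2 * (π * ∫ r in Set.Ioi 0, r * {r : ℝ | a < r ^ 2}.indicator (fun r ↦ exp (-r ^ 2)) r) := by
        simpa [hV, hball] using! integral_fun_norm_addHaar (volume : Measure V)
          ({r : ℝ | a < r ^ 2}.indicator fun r ↦ exp (-r ^ 2))
    _ = 2 * (π * ∫ r in Set.Ioi √a, r * exp (-r ^ 2)) := by
        rw [hradial, ← setIntegral_indicator (measurableSet_lt (by fun_prop) (by fun_prop))]
        simp only [Set.indicator_mul_right]
    _ = π * exp (-a) := by
        rw [integral_Ioi_mul_exp_neg_sq, sq_sqrt ha]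
        ring

lemma gaussianWeight_prod_mul_norm_sq_lt {U : Type*} [NormedAddCommGroup U]
    [InnerProductSpace ℝ U] [FiniteDimensional ℝ U] [MeasurableSpace U] [BorelSpace U]
    (hU : finrank ℝ U = 2) {s : ℝ} (hs : 0 ≤ s) :
    (gaussianWeight U).prod (gaussianWeight V) {p | s * ‖p.2‖ ^ 2 < ‖p.1‖ ^ 2} =
      ENNReal.ofReal (π * (π / (1 + s)) ^ (finrank ℝ V / 2 : ℝ)) := by
  have hfiber (v : V) : gaussianWeight U {u | s * ‖v‖ ^ 2 < ‖u‖ ^ 2} =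
      ENNReal.ofReal π * ENNReal.ofReal (exp (-s * ‖v‖ ^ 2)) := by
    rw [gaussianWeight_lt_norm_sq hU (by positivity), ENNReal.ofReal_mul pi_nonneg, neg_mul]
  have hexp (v : V) : ENNReal.ofReal (exp (-‖v‖ ^ 2)) * ENNReal.ofReal (exp (-s * ‖v‖ ^ 2)) =
      ENNReal.ofReal (exp (-(1 + s) * ‖v‖ ^ 2)) := by
    rw [← ENNReal.ofReal_mul (exp_nonneg _), ← exp_add]
    ring_nf
  rw [Measure.prod_apply_symm (measurableSet_lt (by fun_prop) (by fun_prop))]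
  simp only [Set.preimage_ofPred_eq, hfiber]
  rw [lintegral_const_mul _ (by fun_prop), lintegral_gaussianWeight (by fun_prop)]
  simp only [hexp]
  rw [lintegral_exp_neg_mul_norm_sq (by positivity), ENNReal.ofReal_mul pi_nonneg]

lemma gaussianWeight_mul_norm_sq_lt_norm_sq_starProjection {K : Submodule ℝ V}
    (hK : finrank ℝ K = 2) {t : ℝ} (ht0 : 0 ≤ t) (ht1 : t < 1) :
    gaussianWeight V {v | t * ‖v‖ ^ 2 < ‖K.starProjection v‖ ^ 2} =
      ENNReal.ofReal ((1 - t) ^ (finrank ℝ Kᗮ / 2 : ℝ)) * gaussianWeight V Set.univ := by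
  have ht : 0 < 1 - t := sub_pos.2 ht1
  have hproj := measurePreserving_orthogonalProjections_gaussianWeight K
  have hset : {v : V | t * ‖v‖ ^ 2 < ‖K.starProjection v‖ ^ 2} =
      (fun v ↦ (K.orthogonalProjectionOnto v, Kᗮ.orthogonalProjectionOnto v)) ⁻¹'
        {p | t / (1 - t) * ‖p.2‖ ^ 2 < ‖p.1‖ ^ 2} := by
    ext v
    simp only [Set.mem_ofPred_eq, Set.mem_preimage, Submodule.coe_norm,
      ← Submodule.starProjection_apply]
    rw [K.norm_sq_eq_add_norm_sq_starProjection v, div_mul_eq_mul_div, div_lt_iff₀ ht]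
    constructor <;> intro h <;> linarith
  have huniv : gaussianWeight V Set.univ =
      ENNReal.ofReal (π * π ^ (finrank ℝ Kᗮ / 2 : ℝ)) := by
    have hfinrank : (finrank ℝ V / 2 : ℝ) = 1 + finrank ℝ Kᗮ / 2 := by
      rw [← K.finrank_add_finrank_orthogonal, hK]
      push_cast
      ring
    rw [gaussianWeight_univ, hfinrank, rpow_add pi_pos, rpow_one]
  rw [hset, hproj.measure_preimage (measurableSet_lt (by fun_prop) (by fun_prop)).nullMeasurableSet,
    gaussianWeight_prod_mul_norm_sq_lt hK (by positivity), huniv,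
    ← ENNReal.ofReal_mul (by positivity)]
  have hdiv : π / (1 + t / (1 - t)) = (1 - t) * π := by
    field_simp
    ring
  rw [hdiv, mul_rpow ht.le pi_nonneg, mul_left_comm]

end GaussianWeight

section SphereTransitive

variable {𝕜 E : Type*} [RCLike 𝕜] [NormedAddCommGroup E] [InnerProductSpace 𝕜 E]

lemma norm_sq_inner_map_le_one {φ ψ : E} (hφ : ‖φ‖ = 1) (hψ : ‖ψ‖ = 1) (f : E ≃ₗᵢ[𝕜] E) :
    ‖inner 𝕜 φ (f ψ)‖ ^ 2 ≤ 1 := by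
  have h := norm_inner_le_norm (𝕜 := 𝕜) φ (f ψ)
  rw [hφ, f.norm_map, hψ, one_mul] at h
  exact pow_le_one₀ (norm_nonneg _) h

variable {G : Type*} [Group G]

/-- A unitary representation of `G` acting transitively on the unit vectors. This is all that the
distribution of the fidelity depends on; besides `U(d)` it covers e.g. `SU(d)` for `2 ≤ d`, and
`Sp(d)` acting on `ℂ^(2d)`. -/
def IsSphereTransitive (ρ : G →* (E ≃ₗᵢ[𝕜] E)) : Prop :=
  ∀ x y : E, ‖x‖ = 1 → ‖y‖ = 1 → ∃ g, ρ g x = y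

variable [MeasurableSpace G] [MeasurableMul G] {μ : Measure G} [μ.IsMulLeftInvariant]
  {ρ : G →* (E ≃ₗᵢ[𝕜] E)}

lemma measure_mul_norm_sq_lt_norm_sq_inner (hρ : IsSphereTransitive ρ) {φ x : E}
    (hφ : ‖φ‖ = 1) (hx : x ≠ 0) (ψ : E) (t : ℝ) :
    μ {g | t * ‖x‖ ^ 2 < ‖inner 𝕜 x (ρ g ψ)‖ ^ 2} = μ {g | t < ‖inner 𝕜 φ (ρ g ψ)‖ ^ 2} := by
  obtain ⟨h, hh⟩ := hρ φ ((‖x‖⁻¹ : 𝕜) • x) hφ (norm_smul_inv_norm hx)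
  have hxφ : x = (‖x‖ : 𝕜) • ρ h φ := by
    rw [hh, smul_inv_smul₀ (by simpa using hx)]
  have hinner (g : G) : ‖inner 𝕜 x (ρ g ψ)‖ ^ 2 = ‖x‖ ^ 2 * ‖inner 𝕜 φ (ρ (h⁻¹ * g) ψ)‖ ^ 2 := by
    have : inner 𝕜 (ρ h φ) (ρ g ψ) = inner 𝕜 φ (ρ (h⁻¹ * g) ψ) := by
      rw [← (ρ h).inner_map_map φ, ← Function.comp_apply (f := ρ h),
        ← LinearIsometryEquiv.coe_mul, ← map_mul, mul_inv_cancel_left]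
    conv_lhs => rw [hxφ, inner_smul_left, this]
    simp [mul_pow]
  have hset : {g | t * ‖x‖ ^ 2 < ‖inner 𝕜 x (ρ g ψ)‖ ^ 2} =
      (h⁻¹ * ·) ⁻¹' {g | t < ‖inner 𝕜 φ (ρ g ψ)‖ ^ 2} := by
    ext g
    rw [Set.mem_ofPred_eq, hinner, mul_comm t, mul_lt_mul_iff_right₀ (by positivity)]
    rfl
  rw [hset, measure_preimage_mul]

variable [SecondCountableTopology E] [MeasurableSpace E] [OpensMeasurableSpace E]

lemma measure_lt_norm_sq_inner_mul_measure_univ [SFinite μ] (hρ : IsSphereTransitive ρ)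
    {φ ψ : E} (hmeas : Measurable fun g ↦ ρ g ψ) (hφ : ‖φ‖ = 1)
    {ν : Measure E} [SFinite ν] (hν : ∀ g, MeasurePreserving (ρ g) ν ν) (hν0 : ν {0} = 0) (t : ℝ) :
    μ {g | t < ‖inner 𝕜 φ (ρ g ψ)‖ ^ 2} * ν Set.univ =
      ν {x | t * ‖x‖ ^ 2 < ‖inner 𝕜 x ψ‖ ^ 2} * μ Set.univ := by
  let S : Set (G × E) := {p | t * ‖p.2‖ ^ 2 < ‖inner 𝕜 p.2 (ρ p.1 ψ)‖ ^ 2}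
  have hS : MeasurableSet S := measurableSet_lt (by fun_prop) <|
    ((measurable_snd.inner (hmeas.comp measurable_fst)).norm.pow_const 2)
  have hG (g : G) : ν (Prod.mk g ⁻¹' S) = ν {x | t * ‖x‖ ^ 2 < ‖inner 𝕜 x ψ‖ ^ 2} := by
    rw [← (hν g).measure_preimage (hS.preimage measurable_prodMk_left).nullMeasurableSet]
    simp [S, Set.preimage]
  have hE : ∀ᵐ x ∂ν, μ ((·, x) ⁻¹' S) = μ {g | t < ‖inner 𝕜 φ (ρ g ψ)‖ ^ 2} := by
    filter_upwards [measure_eq_zero_iff_ae_notMem.1 hν0] with x hx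
    exact measure_mul_norm_sq_lt_norm_sq_inner hρ hφ hx ψ t
  calc μ {g | t < ‖inner 𝕜 φ (ρ g ψ)‖ ^ 2} * ν Set.univ
      = μ.prod ν S := by rw [Measure.prod_apply_symm hS, lintegral_congr_ae hE, lintegral_const]
    _ = ν {x | t * ‖x‖ ^ 2 < ‖inner 𝕜 x ψ‖ ^ 2} * μ Set.univ := by
        rw [Measure.prod_apply hS, lintegral_congr hG, lintegral_const]

end SphereTransitive

section Complex

variable {E : Type*} [NormedAddCommGroup E] [InnerProductSpace ℂ E]

section RealStructure

attribute [local instance] InnerProductSpace.complexToReal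

lemma starProjection_restrictScalars (K : Submodule ℂ E) [K.HasOrthogonalProjection]
    [(K.restrictScalars ℝ).HasOrthogonalProjection] (x : E) :
    (K.restrictScalars ℝ).starProjection x = K.starProjection x := by
  refine Submodule.eq_starProjection_of_mem_of_inner_eq_zero (K.starProjection_apply_mem x) ?_
  intro w hw
  rw [real_inner_eq_re_inner ℂ, K.starProjection_inner_eq_zero x w hw, map_zero]

variable [FiniteDimensional ℂ E]

lemma finrank_restrictScalars_orthogonal (K : Submodule ℂ E) :
    finrank ℝ (K.restrictScalars ℝ)ᗮ = 2 * finrank ℂ Kᗮ := by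
  have hreal := (K.restrictScalars ℝ).finrank_add_finrank_orthogonal
  have hK : finrank ℝ (K.restrictScalars ℝ) = 2 * finrank ℂ K := finrank_real_of_complex K
  rw [hK, finrank_real_of_complex, ← K.finrank_add_finrank_orthogonal] at hreal
  omega

variable [MeasurableSpace E] [BorelSpace E]

lemma gaussianWeight_mul_norm_sq_lt_norm_sq_inner {e : E} (he : ‖e‖ = 1)
    {t : ℝ} (ht0 : 0 ≤ t) (ht1 : t < 1) :
    gaussianWeight E {x | t * ‖x‖ ^ 2 < ‖inner ℂ x e‖ ^ 2} =
      ENNReal.ofReal ((1 - t) ^ (finrank ℂ E - 1)) * gaussianWeight E Set.univ := by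
  have hspan : finrank ℂ (ℂ ∙ e) = 1 := finrank_span_singleton (norm_ne_zero_iff.1 (by simp [he]))
  have hline : finrank ℝ ((ℂ ∙ e).restrictScalars ℝ) = 2 :=
    (finrank_real_of_complex (ℂ ∙ e)).trans (by rw [hspan])
  have horth : finrank ℂ (ℂ ∙ e)ᗮ = finrank ℂ E - 1 := by
    rw [← (ℂ ∙ e).finrank_add_finrank_orthogonal, hspan, Nat.add_sub_cancel_left]
  have hproj (x : E) : ‖((ℂ ∙ e).restrictScalars ℝ).starProjection x‖ = ‖inner ℂ x e‖ := by
    rw [starProjection_restrictScalars, Submodule.starProjection_unit_singleton _ he, norm_smul,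
      he, mul_one, norm_inner_symm]
  have htail := gaussianWeight_mul_norm_sq_lt_norm_sq_starProjection hline ht0 ht1
  simpa [hproj, finrank_restrictScalars_orthogonal, horth] using htail

end RealStructure

variable [FiniteDimensional ℂ E] [MeasurableSpace E] [BorelSpace E]
  {G : Type*} [Group G] [MeasurableSpace G] [MeasurableMul G] {μ : Measure G}
  [μ.IsMulLeftInvariant] {ρ : G →* (E ≃ₗᵢ[ℂ] E)}

attribute [local instance] InnerProductSpace.complexToReal in
lemma measure_lt_norm_sq_inner [SFinite μ] (hρ : IsSphereTransitive ρ)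
    {φ ψ : E} (hmeas : Measurable fun g ↦ ρ g ψ) (hφ : ‖φ‖ = 1) (hψ : ‖ψ‖ = 1)
    {t : ℝ} (ht0 : 0 ≤ t) (ht1 : t < 1) :
    μ {g | t < ‖inner ℂ φ (ρ g ψ)‖ ^ 2} =
      ENNReal.ofReal ((1 - t) ^ (finrank ℂ E - 1)) * μ Set.univ := by
  have : Nontrivial E := ⟨ψ, 0, norm_ne_zero_iff.1 (by simp [hψ])⟩
  have hinv (g : G) : MeasurePreserving (ρ g) (gaussianWeight E) (gaussianWeight E) :=
    measurePreserving_gaussianWeight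
      ⟨(ρ g).toLinearEquiv.restrictScalars ℝ, fun x ↦ (ρ g).norm_map x⟩
  have hmass : gaussianWeight E Set.univ ≠ 0 := by
    rw [gaussianWeight_univ]
    exact (ENNReal.ofReal_pos.2 (by positivity)).ne'
  rw [← ENNReal.mul_left_inj hmass (measure_ne_top _ _),
    measure_lt_norm_sq_inner_mul_measure_univ hρ hmeas hφ hinv (gaussianWeight_singleton 0),
    gaussianWeight_mul_norm_sq_lt_norm_sq_inner hψ ht0 ht1, mul_right_comm]

lemma measure_norm_sq_inner_le [IsProbabilityMeasure μ] (hρ : IsSphereTransitive ρ)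
    {φ ψ : E} (hmeas : Measurable fun g ↦ ρ g ψ) (hφ : ‖φ‖ = 1) (hψ : ‖ψ‖ = 1)
    (hE : 2 ≤ finrank ℂ E) {t : ℝ} (ht : t ∈ Set.Icc (0 : ℝ) 1) :
    μ {g | ‖inner ℂ φ (ρ g ψ)‖ ^ 2 ≤ t} = ENNReal.ofReal (1 - (1 - t) ^ (finrank ℂ E - 1)) := by
  rcases ht.2.eq_or_lt with rfl | ht1
  · simp [norm_sq_inner_map_le_one hφ hψ, show finrank ℂ E - 1 ≠ 0 by omega]
  · have hcompl : {g | ‖inner ℂ φ (ρ g ψ)‖ ^ 2 ≤ t} = {g | t < ‖inner ℂ φ (ρ g ψ)‖ ^ 2}ᶜ := by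
      ext g
      simp
    have hS : MeasurableSet {g | t < ‖inner ℂ φ (ρ g ψ)‖ ^ 2} :=
      measurableSet_lt measurable_const (by fun_prop)
    rw [hcompl, prob_compl_eq_one_sub hS, measure_lt_norm_sq_inner hρ hmeas hφ hψ ht.1 ht1,
      measure_univ, mul_one, ENNReal.ofReal_sub _ (pow_nonneg (sub_nonneg.2 ht.2) _),
      ENNReal.ofReal_one]

theorem haar_fidelity_distribution_general [IsProbabilityMeasure μ] (hρ : IsSphereTransitive ρ)
    {φ ψ : E} (hmeas : Measurable fun g ↦ ρ g ψ) (hφ : ‖φ‖ = 1) (hψ : ‖ψ‖ = 1)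
    (hE : 2 ≤ finrank ℂ E) :
    (∀ t ∈ Set.Icc (0 : ℝ) 1, μ {g | ‖inner ℂ φ (ρ g ψ)‖ ^ 2 ≤ t} =
      ENNReal.ofReal (1 - (1 - t) ^ (finrank ℂ E - 1))) ∧
    μ.map (fun g ↦ ‖inner ℂ φ (ρ g ψ)‖ ^ 2) = volume.withDensity fun f : ℝ ↦ ENNReal.ofReal
      (if 0 ≤ f ∧ f ≤ 1 then ((finrank ℂ E : ℝ) - 1) * (1 - f) ^ (finrank ℂ E - 2) else 0) := by
  have hcdf (t : ℝ) (ht : t ∈ Set.Icc (0 : ℝ) 1) :=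
    measure_norm_sq_inner_le (μ := μ) hρ hmeas hφ hψ hE ht
  refine ⟨hcdf, ?_⟩
  have hF : Measurable fun g ↦ ‖inner ℂ φ (ρ g ψ)‖ ^ 2 := by fun_prop
  obtain ⟨n, hn⟩ := Nat.exists_eq_add_of_le' hE
  have hcast : (finrank ℂ E : ℝ) - 1 = n + 1 := by
    rw [hn]
    push_cast
    ring
  rw [withDensity_ofReal_ite_mem_Icc, hcast, show finrank ℂ E - 2 = n by omega]
  have := Measure.isProbabilityMeasure_map (μ := μ) hF.aemeasurable
  refine ext_of_Iic_of_ae_mem_Icc zero_le_one ?_ ?_ fun t ht ↦ ?_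
  · exact (ae_map_iff hF.aemeasurable measurableSet_Icc).2 <| .of_forall fun g ↦
      ⟨sq_nonneg _, norm_sq_inner_map_le_one hφ hψ (ρ g)⟩
  · exact (withDensity_absolutelyContinuous _ _).ae_le (ae_restrict_mem measurableSet_Icc)
  · rw [Measure.map_apply hF measurableSet_Iic, restrict_Icc_withDensity_mul_one_sub_pow_Iic n ht,
      show n + 1 = finrank ℂ E - 1 by omega]
    exact hcdf t ht

end Complex

section UnitaryGroup

variable (n : Type*) [Fintype n] [DecidableEq n]

/-- The identification of unitary matrices with the linear isometries of `ℂⁿ` they induce. -/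
def unitaryGroupMulEquivIsometry :
    Matrix.unitaryGroup n ℂ ≃* (EuclideanSpace ℂ n ≃ₗᵢ[ℂ] EuclideanSpace ℂ n) :=
  (Unitary.mapEquiv ⟨(Matrix.toEuclideanCLM (n := n) (𝕜 := ℂ) : _ ≃* _),
    map_star Matrix.toEuclideanCLM⟩).toMulEquiv.trans Unitary.linearIsometryEquiv

variable {n}

lemma unitaryGroupMulEquivIsometry_toLp (U : Matrix.unitaryGroup n ℂ) (x : n → ℂ) :
    unitaryGroupMulEquivIsometry n U (WithLp.toLp 2 x) =
      WithLp.toLp 2 ((U : Matrix n n ℂ) *ᵥ x) := rfl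

lemma continuous_unitaryGroupMulEquivIsometry_apply (x : EuclideanSpace ℂ n) :
    Continuous fun U ↦ unitaryGroupMulEquivIsometry n U x :=
  (PiLp.continuous_toLp 2 _).comp <|
    continuous_subtype_val.matrix_mulVec (continuous_const (y := WithLp.ofLp x))

lemma isSphereTransitive_unitaryGroupMulEquivIsometry :
    IsSphereTransitive (unitaryGroupMulEquivIsometry n).toMonoidHom := fun _ _ hx hy ↦
  have ⟨f, hf⟩ := exists_linearIsometryEquiv_apply_eq (𝕜 := ℂ) hx hy
  ⟨(unitaryGroupMulEquivIsometry n).symm f, by simpa using hf⟩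

end UnitaryGroup

lemma vecInner_eq_inner {d : ℕ} (x y : Fin d → ℂ) :
    vecInner x y = inner ℂ (WithLp.toLp 2 x) (WithLp.toLp 2 y) := by
  simp [vecInner, PiLp.inner_apply, mul_comm]

/-- For `d ≥ 2`, unit vectors `ψ, φ` in `ℂ^d` and a Haar-distributed
unitary `U`, the fidelity `|⟨φ, Uψ⟩|²` has CDF `t ↦ 1 - (1-t)^(d-1)` on `[0,1]`;
equivalently, its distribution has density `f ↦ (d-1)(1-f)^(d-2)` on `[0,1]` with respect
to Lebesgue measure. -/
theorem haar_fidelity_distribution (d : ℕ) (hd : 2 ≤ d)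
    (ψ φ : Fin d → ℂ) (hψ : ∑ i : Fin d, ‖ψ i‖ ^ 2 = 1) (hφ : ∑ i : Fin d, ‖φ i‖ ^ 2 = 1)
    (μ : Measure (Matrix.unitaryGroup (Fin d) ℂ))
    [IsProbabilityMeasure μ] [μ.IsHaarMeasure] :
    (∀ t ∈ Set.Icc (0 : ℝ) 1,
      μ {U : Matrix.unitaryGroup (Fin d) ℂ |
          ‖vecInner φ ((U : Matrix (Fin d) (Fin d) ℂ).mulVec ψ)‖ ^ 2 ≤ t}
        = ENNReal.ofReal (1 - (1 - t) ^ (d - 1))) ∧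
    Measure.map (fun U : Matrix.unitaryGroup (Fin d) ℂ =>
        ‖vecInner φ ((U : Matrix (Fin d) (Fin d) ℂ).mulVec ψ)‖ ^ 2) μ
      = volume.withDensity (fun f : ℝ =>
          ENNReal.ofReal (if 0 ≤ f ∧ f ≤ 1 then ((d : ℝ) - 1) * (1 - f) ^ (d - 2) else 0)) := by
  have hψ' : ‖WithLp.toLp 2 ψ‖ = 1 := by simpa [EuclideanSpace.norm_eq] using hψ
  have hφ' : ‖WithLp.toLp 2 φ‖ = 1 := by simpa [EuclideanSpace.norm_eq] using hφ
  simpa [vecInner_eq_inner, unitaryGroupMulEquivIsometry_toLp] using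
    haar_fidelity_distribution_general (μ := μ)
      isSphereTransitive_unitaryGroupMulEquivIsometry
      (continuous_unitaryGroupMulEquivIsometry_apply (WithLp.toLp 2 ψ)).measurable hφ' hψ'
      (by simpa using hd)
end
end

section
/- Let γ ∈ (0, 1]. Then ∫_0^{(1−γ)/2} f · (1/γ)·ln((1+γ)/(1−γ)) df + ∫_{(1−γ)/2}^{(1+γ)/2} f · (1/γ)·ln((1+γ)/(2f)) df = 1/4; i.e., the mean of the fidelity distribution of Haar-random locally rotated two-qubit states with Schmidt coefficients (√((1+γ)/2), √((1−γ)/2)) with respect to a fixed product state equals 1/4, independently of γ. -/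
open MeasureTheory intervalIntegral

/-!
Put `a = (1 - γ) / 2` and `b = (1 + γ) / 2`, so that the density at `f` is
`log (b / max a f) / (b - a)` on `[0, b]`. Since `x ↦ x² / 2 * log (b / x) + x² / 4` is a primitive
of `x ↦ x * log (b / x)` and `log (b / b) = 0`, the part of the mean over `[a, b]` has, up to the
common factor `1 / (b - a)`, a boundary term `-a² / 2 * log (b / a)`, which cancels the part over
`[0, a]`. What remains is `(b² - a²) / (4 * (b - a)) = (a + b) / 4`, and `a + b = 1`.
-/

theorem continuous_mul_log_div (c : ℝ) : Continuous fun x : ℝ => x * Real.log (c / x) := by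
  rcases eq_or_ne c 0 with rfl | hc
  · simpa using continuous_const
  have h_log_sub : (fun x : ℝ => x * Real.log (c / x)) =
      fun x => x * Real.log c - x * Real.log x := by
    funext x
    rcases eq_or_ne x 0 with rfl | hx
    · simp
    · rw [Real.log_div hc hx, mul_sub]
  rw [h_log_sub]
  exact (continuous_mul_const _).sub Real.continuous_mul_log

theorem hasDerivAt_log_div {c x : ℝ} (hc : c ≠ 0) (hx : x ≠ 0) :
    HasDerivAt (fun y : ℝ => Real.log (c / y)) (-x⁻¹) x := by
  have h_log_sub : HasDerivAt (fun y : ℝ => Real.log c - Real.log y) (-x⁻¹) x :=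
    (Real.hasDerivAt_log hx).const_sub _
  refine h_log_sub.congr_of_eventuallyEq ?_
  filter_upwards [isOpen_ne.mem_nhds hx] with y hy using Real.log_div hc hy

theorem intervalIntegrable_log_div (c a b : ℝ) :
    IntervalIntegrable (fun x : ℝ => Real.log (c / x)) volume a b := by
  rcases eq_or_ne c 0 with rfl | hc
  · simp
  have h_log_sub : IntervalIntegrable (fun x : ℝ => Real.log c - Real.log x) volume a b :=
    intervalIntegrable_const.sub intervalIntegrable_log'
  refine h_log_sub.congr_ae (ae_restrict_of_ae ?_)
  filter_upwards [Measure.ae_ne volume 0] with x hx using (Real.log_div hc hx).symm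

theorem hasDerivAt_pow_mul_log_div_add {c x : ℝ} (hc : c ≠ 0) (hx : x ≠ 0) (n : ℕ) :
    HasDerivAt (fun y : ℝ => y ^ (n + 1) * Real.log (c / y) / (n + 1) + y ^ (n + 1) / (n + 1) ^ 2)
      (x ^ n * Real.log (c / x)) x := by
  have h_pow : HasDerivAt (fun y : ℝ => y ^ (n + 1)) ((n + 1) * x ^ n) x := by
    simpa using hasDerivAt_pow (n + 1) x
  refine (((h_pow.mul (hasDerivAt_log_div hc hx)).div_const _).add
    (h_pow.div_const _)).congr_deriv ?_
  field_simp
  ring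

theorem integral_pow_mul_log_div {c : ℝ} (hc : c ≠ 0) (n : ℕ) (a b : ℝ) :
    ∫ x in a..b, x ^ n * Real.log (c / x) =
      (b ^ (n + 1) * Real.log (c / b) / (n + 1) + b ^ (n + 1) / (n + 1) ^ 2) -
        (a ^ (n + 1) * Real.log (c / a) / (n + 1) + a ^ (n + 1) / (n + 1) ^ 2) := by
  have h_cont : Continuous fun x : ℝ =>
      x ^ (n + 1) * Real.log (c / x) / (n + 1) + x ^ (n + 1) / (n + 1) ^ 2 := by
    have h_mul_log := continuous_mul_log_div c
    simp only [pow_succ _ n, mul_assoc]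
    fun_prop
  have h_int : IntervalIntegrable (fun x : ℝ => x ^ n * Real.log (c / x)) volume a b :=
    (intervalIntegrable_log_div c a b).continuousOn_mul (continuous_pow n).continuousOn
  exact integral_eq_of_hasDerivAt_off_countable _ _ (Set.countable_singleton (0 : ℝ))
    h_cont.continuousOn (fun x hx => hasDerivAt_pow_mul_log_div_add hc hx.2 n) h_int

theorem integral_pow_mul_log_div_const_add {b : ℝ} (hb : b ≠ 0) (n : ℕ) (a : ℝ) :
    (∫ x in (0 : ℝ)..a, x ^ n * Real.log (b / a)) + (∫ x in a..b, x ^ n * Real.log (b / x)) =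
      (b ^ (n + 1) - a ^ (n + 1)) / (n + 1) ^ 2 := by
  rw [intervalIntegral.integral_mul_const, integral_pow, integral_pow_mul_log_div hb, div_self hb,
    Real.log_one, zero_pow n.succ_ne_zero]
  ring

-- `a < b` are the squared Schmidt coefficients of the state, without the normalization `a + b = 1`.
theorem mean_fidelity_qubit_eq_quarter_general {a b : ℝ} (ha : 0 ≤ a) (hab : a < b) :
    (∫ f in (0 : ℝ)..a, f * ((1 / (b - a)) * Real.log (b / a))) +
      (∫ f in a..b, f * ((1 / (b - a)) * Real.log (b / f))) = (a + b) / 4 := by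
  have h_moment := integral_pow_mul_log_div_const_add (ha.trans_lt hab).ne' 1 a
  have h_ne : b - a ≠ 0 := sub_ne_zero.mpr hab.ne'
  simp only [pow_one] at h_moment
  simp only [mul_left_comm _ (1 / (b - a)), intervalIntegral.integral_const_mul]
  rw [← mul_add, h_moment]
  field_simp
  push_cast
  ring

/-- For `γ ∈ (0,1]`, the mean of the fidelity distribution of Haar-random
locally rotated two-qubit states with Schmidt coefficients `(√((1+γ)/2), √((1−γ)/2))` with
respect to a fixed product state equals `1/4`, independently of `γ`:
`∫₀^{(1−γ)/2} f·(1/γ)ln((1+γ)/(1−γ)) df + ∫_{(1−γ)/2}^{(1+γ)/2} f·(1/γ)ln((1+γ)/(2f)) df = 1/4`. -/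
theorem mean_fidelity_qubit_eq_quarter (γ : ℝ) (hγ : γ ∈ Set.Ioc (0 : ℝ) 1) :
    (∫ f in (0 : ℝ)..((1 - γ) / 2), f * ((1 / γ) * Real.log ((1 + γ) / (1 - γ)))) +
      (∫ f in ((1 - γ) / 2)..((1 + γ) / 2), f * ((1 / γ) * Real.log ((1 + γ) / (2 * f))))
      = 1 / 4 := by
  have h_mean := mean_fidelity_qubit_eq_quarter_general (a := (1 - γ) / 2) (b := (1 + γ) / 2)
    (by linarith [hγ.2]) (by linarith [hγ.1])
  have h_sub : (1 + γ) / 2 - (1 - γ) / 2 = γ := by ring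
  have h_add : (1 - γ) / 2 + (1 + γ) / 2 = 1 := by ring
  simpa only [h_sub, h_add, div_div_div_cancel_right₀ (two_ne_zero' ℝ), div_div] using h_mean
end
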